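/- Fourth-order three-body error term (paper eq. A18d): for pairwise distinct indices i, j, k and any phase-space point (x,p) with r_ij ≠ 0 and r_ik ≠ 0, the left-nested canonical Poisson bracket satisfies {{{{V_ij, T}, V_ik}, T}, V_ij}(x,p) = −2 (G³ (m i)(m j)(m k)((m i)+(m j)) / (r_ij⁶ r_ik³)) · (x_ij · x_ik) − (G³ (m i)(m j)²(m k) / (r_ij⁶ r_ik⁵)) · ( 3 (x_ij · x_ik)² − r_ij² r_ik² ). -/

import Mathlib

open scoped RealInnerProductSpace BigOperators

noncomputable section

/-- Three-dimensional Euclidean space. -/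
abbrev E3 : Type := EuclideanSpace ℝ (Fin 3)

/-- Phase space for `N` particles: positions and momenta. -/
abbrev Phase (N : ℕ) : Type := (Fin N → E3) × (Fin N → E3)

/-- Gradient of a phase-space function with respect to the `k`-th position. -/
def gradPos {N : ℕ} (A : Phase N → ℝ) (k : Fin N) (w : Phase N) : E3 :=
  gradient (fun y => A (Function.update w.1 k y, w.2)) (w.1 k)

/-- Gradient of a phase-space function with respect to the `k`-th momentum. -/
def gradMom {N : ℕ} (A : Phase N → ℝ) (k : Fin N) (w : Phase N) : E3 :=
  gradient (fun y => A (w.1, Function.update w.2 k y)) (w.2 k)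

/-- Canonical Poisson bracket of two phase-space functions. -/
def poisson {N : ℕ} (A B : Phase N → ℝ) (w : Phase N) : ℝ :=
  ∑ k, (⟪gradPos A k w, gradMom B k w⟫ - ⟪gradMom A k w, gradPos B k w⟫)

/-- Kinetic energy `T = Σ_i ‖p_i‖²/(2 m_i)`. -/
def kinetic {N : ℕ} (m : Fin N → ℝ) (w : Phase N) : ℝ :=
  ∑ i, ‖w.2 i‖ ^ 2 / (2 * m i)

/-- Pair potential `V_ij = −G m_i m_j / ‖x_i − x_j‖`. -/
def pairPot {N : ℕ} (G : ℝ) (m : Fin N → ℝ) (i j : Fin N) (w : Phase N) : ℝ :=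
  -(G * m i * m j) / ‖w.1 i - w.1 j‖

/-!
If `A` and `B` depend on positions only, then `{A, T}` is linear in the momenta, and
`{{A, T}, B} = -∑_q m_q⁻¹ ∇_q A · ∇_q B` again depends on positions only. Write
`F u = u / ‖u‖³`, so that `∇_{x_i} V_ij = G m_i m_j F x_ij`; since `V_ij` involves two particles
only, `{{A, T}, V_ij} = -G (m_j ∇_i A - m_i ∇_j A) · F x_ij`.
Applied with `A = V_ij` and the potential `V_ik`, this gives
`{{V_ij, T}, V_ik} = -G² m_i m_j m_k F x_ij · F x_ik`. Applied a second time, with this bracket as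
`A` and the potential `V_ij`, it leaves only the symmetric derivative `DF` to be evaluated, on
`F x_ij` and `F x_ik`.
-/

section Gradient

variable {ι E : Type*} [NormedAddCommGroup E] [InnerProductSpace ℝ E] [CompleteSpace E]

theorem hasGradientAt_const_mul {f : E → ℝ} {g x : E} (hf : HasGradientAt f g x) (c : ℝ) :
    HasGradientAt (fun y => c * f y) (c • g) x := by
  rw [hasGradientAt_iff_hasFDerivAt, map_smul]
  exact hf.hasFDerivAt.const_mul c

theorem hasGradientAt_inner_right (v x : E) : HasGradientAt (fun y => ⟪v, y⟫) v x :=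
  (InnerProductSpace.toDual ℝ E v).hasFDerivAt

theorem hasGradientAt_norm_sq (x : E) : HasGradientAt (fun y => ‖y‖ ^ 2) ((2 : ℝ) • x) x := by
  rw [hasGradientAt_iff_hasFDerivAt]
  refine (hasStrictFDerivAt_norm_sq x).hasFDerivAt.congr_fderiv ?_
  ext v
  simp [two_smul]

theorem hasGradientAt_inner {F : Type*} [NormedAddCommGroup F] [InnerProductSpace ℝ F]
    [CompleteSpace F] {f g : E → F} {f' g' : E →L[ℝ] F} {x : E} (hf : HasFDerivAt f f' x)
    (hg : HasFDerivAt g g' x) :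
    HasGradientAt (fun y => ⟪f y, g y⟫)
      (ContinuousLinearMap.adjoint f' (g x) + ContinuousLinearMap.adjoint g' (f x)) x := by
  rw [hasGradientAt_iff_hasFDerivAt]
  refine (hf.inner ℝ hg).congr_fderiv ?_
  ext v
  simp [ContinuousLinearMap.adjoint_inner_left, real_inner_comm, add_comm]

theorem gradient_sum_update [Fintype ι] [DecidableEq ι] (f : ι → E → ℝ) (p : ι → E) (l : ι)
    (x : E) : gradient (fun y => ∑ q, f q (Function.update p l y q)) x = gradient (f l) x := by
  have split_sum : (fun y => ∑ q, f q (Function.update p l y q)) =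
      fun y => f l y + ∑ q ∈ Finset.univ \ {l}, f q (p q) := by
    funext y
    simp only [Function.apply_update f, Finset.sum_update_of_mem (Finset.mem_univ l)]
  rw [split_sum, gradient, fderiv_add_const, gradient]

end Gradient

section InverseSquareField

variable {E : Type*} [NormedAddCommGroup E] [InnerProductSpace ℝ E]

/-- The inverse-square field `u / ‖u‖³`, the gradient of `-1 / ‖u‖`; it takes the value `0` at the
origin. Forces between particles are multiples of it. -/
def inverseSquareField (u : E) : E := (‖u‖ ^ 3)⁻¹ • u

/-- The tidal tensor `v ↦ v / ‖u‖³ - 3 ⟪u, v⟫ u / ‖u‖⁵`, the derivative of `inverseSquareField`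
at `u ≠ 0`. -/
def tidalTensor (u : E) : E →L[ℝ] E :=
  (‖u‖ ^ 3)⁻¹ • ContinuousLinearMap.id ℝ E - (3 * (‖u‖ ^ 5)⁻¹) • (innerSL ℝ u).smulRight u

theorem tidalTensor_apply (u v : E) :
    tidalTensor u v = (‖u‖ ^ 3)⁻¹ • v - (3 * (‖u‖ ^ 5)⁻¹ * ⟪u, v⟫) • u := by
  simp [tidalTensor, mul_smul]

theorem inverseSquareField_neg (u : E) : inverseSquareField (-u) = -inverseSquareField u := by
  simp [inverseSquareField]

theorem tidalTensor_neg (u : E) : tidalTensor (-u) = tidalTensor u := by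
  ext v
  simp [tidalTensor_apply]

theorem inner_tidalTensor_left (u v w : E) : ⟪tidalTensor u v, w⟫ = ⟪v, tidalTensor u w⟫ := by
  simp only [tidalTensor_apply, inner_sub_left, inner_sub_right, real_inner_smul_left,
    real_inner_smul_right, real_inner_comm u v]
  ring

theorem inner_inverseSquareField (u v : E) :
    ⟪inverseSquareField u, inverseSquareField v⟫ = ⟪u, v⟫ / (‖u‖ ^ 3 * ‖v‖ ^ 3) := by
  rw [inverseSquareField, inverseSquareField, real_inner_smul_left, real_inner_smul_right]
  field_simp

theorem tidalTensor_inverseSquareField_self {u : E} (hu : u ≠ 0) :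
    tidalTensor u (inverseSquareField u) = -(2 * (‖u‖ ^ 3)⁻¹) • inverseSquareField u := by
  have hu' : ‖u‖ ≠ 0 := norm_ne_zero_iff.mpr hu
  simp only [tidalTensor_apply, inverseSquareField, real_inner_smul_right,
    real_inner_self_eq_norm_sq, smul_smul, ← sub_smul]
  congr 1
  field_simp
  ring

theorem inner_tidalTensor_self_inverseSquareField {u : E} (hu : u ≠ 0) (v : E) :
    ⟪tidalTensor u (inverseSquareField v), inverseSquareField u⟫ =
      -2 * ⟪u, v⟫ / (‖u‖ ^ 6 * ‖v‖ ^ 3) := by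
  rw [inner_tidalTensor_left, tidalTensor_inverseSquareField_self hu, real_inner_smul_right,
    inner_inverseSquareField, real_inner_comm]
  field_simp

theorem inner_tidalTensor_inverseSquareField {u v : E} (hu : u ≠ 0) (hv : v ≠ 0) :
    ⟪tidalTensor v (inverseSquareField u), inverseSquareField u⟫ =
      (‖u‖ ^ 2 * ‖v‖ ^ 2 - 3 * ⟪u, v⟫ ^ 2) / (‖u‖ ^ 6 * ‖v‖ ^ 5) := by
  have hu' : ‖u‖ ≠ 0 := norm_ne_zero_iff.mpr hu
  have hv' : ‖v‖ ≠ 0 := norm_ne_zero_iff.mpr hv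
  simp only [tidalTensor_apply, inverseSquareField, inner_sub_left, real_inner_smul_left,
    real_inner_smul_right, real_inner_self_eq_norm_sq, real_inner_comm u v]
  field_simp

theorem hasFDerivAt_norm_of_ne_zero {u : E} (hu : u ≠ 0) :
    HasFDerivAt (fun x : E => ‖x‖) (‖u‖⁻¹ • innerSL ℝ u) u := by
  have hu' : ‖u‖ ≠ 0 := norm_ne_zero_iff.mpr hu
  have hsqrt := (hasStrictFDerivAt_norm_sq u).hasFDerivAt.sqrt (pow_ne_zero 2 hu')
  simp only [Real.sqrt_sq (norm_nonneg _)] at hsqrt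
  refine hsqrt.congr_fderiv ?_
  ext v
  simp only [one_div, mul_inv_rev, smul_apply, coe_innerSL_apply, nsmul_eq_mul, Nat.cast_ofNat,
    smul_eq_mul]
  field_simp

theorem hasFDerivAt_norm_zpow {u : E} (hu : u ≠ 0) (n : ℤ) :
    HasFDerivAt (fun x : E => ‖x‖ ^ n) ((n * ‖u‖ ^ (n - 2)) • innerSL ℝ u) u := by
  have hu' : ‖u‖ ≠ 0 := norm_ne_zero_iff.mpr hu
  refine ((hasDerivAt_zpow n ‖u‖ (.inl hu')).comp_hasFDerivAt u
    (hasFDerivAt_norm_of_ne_zero hu)).congr_fderiv ?_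
  rw [smul_smul, mul_assoc, ← zpow_sub_one₀ hu', sub_sub, one_add_one_eq_two]

theorem hasFDerivAt_inverseSquareField {u : E} (hu : u ≠ 0) :
    HasFDerivAt inverseSquareField (tidalTensor u) u := by
  have hfield : (fun x : E => ‖x‖ ^ (-3 : ℤ) • x) = inverseSquareField := by
    funext x
    rw [inverseSquareField, zpow_neg, zpow_ofNat]
  rw [← hfield]
  refine ((hasFDerivAt_norm_zpow hu (-3)).smul (hasFDerivAt_id u)).congr_fderiv ?_
  ext v
  norm_num [tidalTensor_apply, zpow_neg, sub_eq_add_neg]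

theorem hasFDerivAt_inverseSquareField_sub {x b : E} (h : x ≠ b) :
    HasFDerivAt (fun y => inverseSquareField (y - b)) (tidalTensor (x - b)) x :=
  (hasFDerivAt_inverseSquareField (sub_ne_zero.mpr h)).comp
    (f := fun y => y - b) x ((hasFDerivAt_id x).sub_const b)

variable [CompleteSpace E]

theorem hasGradientAt_neg_div_norm_sub (c : ℝ) {x b : E} (h : x ≠ b) :
    HasGradientAt (fun y => -c / ‖y - b‖) (c • inverseSquareField (x - b)) x := by
  have hpot : (fun y : E => -c * ‖y - b‖ ^ (-1 : ℤ)) = fun y => -c / ‖y - b‖ := by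
    funext y
    rw [zpow_neg_one, div_eq_mul_inv]
  rw [← hpot, hasGradientAt_iff_hasFDerivAt]
  refine (((hasFDerivAt_norm_zpow (sub_ne_zero.mpr h) (-1)).comp x
    ((hasFDerivAt_id x).sub_const b)).const_mul (-c)).congr_fderiv ?_
  ext v
  norm_num [inverseSquareField, zpow_neg, real_inner_smul_left]

theorem adjoint_tidalTensor (u : E) :
    ContinuousLinearMap.adjoint (tidalTensor u) = tidalTensor u :=
  ((ContinuousLinearMap.eq_adjoint_iff _ _).mpr (inner_tidalTensor_left u)).symm

theorem hasGradientAt_inner_inverseSquareField_const {x b : E} (h : x ≠ b) (v : E) :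
    HasGradientAt (fun y => ⟪inverseSquareField (y - b), v⟫) (tidalTensor (x - b) v) x := by
  simpa only [adjoint_tidalTensor, map_zero, zero_apply, add_zero] using
    hasGradientAt_inner (hasFDerivAt_inverseSquareField_sub h) (hasFDerivAt_const v x)

theorem hasGradientAt_inner_inverseSquareField {x b c : E} (hb : x ≠ b) (hc : x ≠ c) :
    HasGradientAt (fun y => ⟪inverseSquareField (y - b), inverseSquareField (y - c)⟫)
      (tidalTensor (x - b) (inverseSquareField (x - c)) +
        tidalTensor (x - c) (inverseSquareField (x - b))) x := by
  simpa only [adjoint_tidalTensor] using hasGradientAt_inner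
    (hasFDerivAt_inverseSquareField_sub hb) (hasFDerivAt_inverseSquareField_sub hc)

end InverseSquareField

section PoissonKinetic

variable {N : ℕ}

/-- A phase-space function that depends on the positions only, like the pair potentials and their
brackets `{{A, T}, B}`. -/
def MomentumIndep (A : Phase N → ℝ) : Prop :=
  ∀ x p p', A (x, p) = A (x, p')

theorem MomentumIndep.gradMom_eq_zero {A : Phase N → ℝ} (hA : MomentumIndep A) (l : Fin N)
    (w : Phase N) : gradMom A l w = 0 := by
  have hconst : (fun y => A (w.1, Function.update w.2 l y)) = fun _ => A w :=
    funext fun y => hA w.1 _ w.2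
  rw [gradMom, hconst]
  exact gradient_const _ _

theorem MomentumIndep.gradPos_eq {A : Phase N → ℝ} (hA : MomentumIndep A) (l : Fin N)
    (x p p' : Fin N → E3) : gradPos A l (x, p) = gradPos A l (x, p') :=
  congrArg (gradient · (x l)) (funext fun _ => hA _ p p')

theorem gradPos_kinetic (m : Fin N → ℝ) (l : Fin N) (w : Phase N) :
    gradPos (kinetic m) l w = 0 :=
  gradient_const (w.1 l) (kinetic m w)

theorem gradMom_kinetic (m : Fin N → ℝ) (l : Fin N) (w : Phase N) :
    gradMom (kinetic m) l w = (m l)⁻¹ • w.2 l := by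
  have hgrad : HasGradientAt (fun y : E3 => ‖y‖ ^ 2 / (2 * m l)) ((m l)⁻¹ • w.2 l) (w.2 l) := by
    convert hasGradientAt_const_mul (hasGradientAt_norm_sq (w.2 l)) (2 * m l)⁻¹ using 1
    · funext y
      rw [div_eq_inv_mul]
    · rw [smul_smul, mul_inv_rev, inv_mul_cancel_right₀ two_ne_zero]
  exact (gradient_sum_update (fun q (y : E3) => ‖y‖ ^ 2 / (2 * m q)) w.2 l _).trans hgrad.gradient

theorem poisson_kinetic (A : Phase N → ℝ) (m : Fin N → ℝ) (w : Phase N) :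
    poisson A (kinetic m) w = ∑ q, ⟪(m q)⁻¹ • gradPos A q w, w.2 q⟫ := by
  simp only [poisson, gradMom_kinetic, gradPos_kinetic, inner_zero_right, sub_zero,
    real_inner_smul_left, real_inner_smul_right]

theorem MomentumIndep.gradMom_poisson_kinetic {A : Phase N → ℝ} (hA : MomentumIndep A)
    (m : Fin N → ℝ) (l : Fin N) (w : Phase N) :
    gradMom (poisson A (kinetic m)) l w = (m l)⁻¹ • gradPos A l w := by
  have hlinear : (fun y => poisson A (kinetic m) (w.1, Function.update w.2 l y)) =
      fun y => ∑ q, ⟪(m q)⁻¹ • gradPos A q w, Function.update w.2 l y q⟫ := by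
    funext y
    simp only [poisson_kinetic, hA.gradPos_eq _ w.1 (Function.update w.2 l y) w.2]
  rw [gradMom, hlinear, gradient_sum_update (fun q y => ⟪(m q)⁻¹ • gradPos A q w, y⟫)]
  exact (hasGradientAt_inner_right _ _).gradient

theorem MomentumIndep.poisson_poisson_kinetic {A B : Phase N → ℝ} (hA : MomentumIndep A)
    (hB : MomentumIndep B) (m : Fin N → ℝ) (w : Phase N) :
    poisson (poisson A (kinetic m)) B w =
      -∑ q, (m q)⁻¹ * ⟪gradPos A q w, gradPos B q w⟫ := by
  simp only [poisson, hB.gradMom_eq_zero, ← hA.gradMom_poisson_kinetic, inner_zero_right,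
    zero_sub, Finset.sum_neg_distrib, ← real_inner_smul_left]

theorem MomentumIndep.momentumIndep_poisson_poisson_kinetic {A B : Phase N → ℝ}
    (hA : MomentumIndep A) (hB : MomentumIndep B) (m : Fin N → ℝ) :
    MomentumIndep (poisson (poisson A (kinetic m)) B) := by
  intro x p p'
  simp only [hA.poisson_poisson_kinetic hB, hA.gradPos_eq _ x p p', hB.gradPos_eq _ x p p']

end PoissonKinetic

section PairPotential

variable {N : ℕ} (G : ℝ) (m : Fin N → ℝ) {i j k : Fin N} {w : Phase N}

theorem momentumIndep_pairPot (i j : Fin N) : MomentumIndep (pairPot G m i j) :=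
  fun _ _ _ => rfl

theorem pairPot_comm (i j : Fin N) : pairPot G m i j = pairPot G m j i := by
  funext w
  rw [pairPot, pairPot, norm_sub_rev, mul_right_comm]

theorem gradPos_pairPot_left (hij : i ≠ j) (h : w.1 i ≠ w.1 j) :
    gradPos (pairPot G m i j) i w = (G * m i * m j) • inverseSquareField (w.1 i - w.1 j) := by
  simp only [gradPos, pairPot, Function.update_self, Function.update_of_ne hij.symm]
  exact (hasGradientAt_neg_div_norm_sub _ h).gradient

theorem gradPos_pairPot_right (hij : i ≠ j) (h : w.1 i ≠ w.1 j) :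
    gradPos (pairPot G m i j) j w = -(G * m i * m j) • inverseSquareField (w.1 i - w.1 j) := by
  rw [pairPot_comm, gradPos_pairPot_left G m hij.symm h.symm, ← neg_sub (w.1 i),
    inverseSquareField_neg, smul_neg, neg_smul, mul_right_comm]

theorem gradPos_pairPot_of_ne {l : Fin N} (hi : i ≠ l) (hj : j ≠ l) (w : Phase N) :
    gradPos (pairPot G m i j) l w = 0 := by
  simp only [gradPos, pairPot, Function.update_of_ne hi, Function.update_of_ne hj]
  exact gradient_const _ _

theorem poisson_poisson_kinetic_pairPot {A : Phase N → ℝ} (hA : MomentumIndep A) (hij : i ≠ j)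
    (hi : m i ≠ 0) (hj : m j ≠ 0) (h : w.1 i ≠ w.1 j) :
    poisson (poisson A (kinetic m)) (pairPot G m i j) w =
      -G * ⟪m j • gradPos A i w - m i • gradPos A j w, inverseSquareField (w.1 i - w.1 j)⟫ := by
  rw [hA.poisson_poisson_kinetic (momentumIndep_pairPot G m i j), Finset.sum_eq_add i j hij]
  · rw [gradPos_pairPot_left G m hij h, gradPos_pairPot_right G m hij h]
    simp only [inner_sub_left, real_inner_smul_left, real_inner_smul_right]
    field_simp
    ring
  · intro q _ hq
    rw [gradPos_pairPot_of_ne G m hq.1.symm hq.2.symm, inner_zero_right, mul_zero]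
  · simp
  · simp

theorem poisson_pairPot_kinetic_pairPot (hi : m i ≠ 0) (hk : m k ≠ 0) (hij : i ≠ j)
    (hik : i ≠ k) (hjk : j ≠ k) (hxij : w.1 i ≠ w.1 j) (hxik : w.1 i ≠ w.1 k) :
    poisson (poisson (pairPot G m i j) (kinetic m)) (pairPot G m i k) w =
      -(G ^ 2 * m i * m j * m k) *
        ⟪inverseSquareField (w.1 i - w.1 j), inverseSquareField (w.1 i - w.1 k)⟫ := by
  rw [poisson_poisson_kinetic_pairPot G m (momentumIndep_pairPot G m i j) hik hi hk hxik,
    gradPos_pairPot_left G m hij hxij, gradPos_pairPot_of_ne G m hik hjk, smul_zero, sub_zero,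
    real_inner_smul_left, real_inner_smul_left]
  ring

theorem gradPos_poisson_pairPot_kinetic_pairPot_shared (hi : m i ≠ 0) (hk : m k ≠ 0)
    (hij : i ≠ j) (hik : i ≠ k) (hjk : j ≠ k) (hxij : w.1 i ≠ w.1 j) (hxik : w.1 i ≠ w.1 k) :
    gradPos (poisson (poisson (pairPot G m i j) (kinetic m)) (pairPot G m i k)) i w =
      -(G ^ 2 * m i * m j * m k) •
        (tidalTensor (w.1 i - w.1 j) (inverseSquareField (w.1 i - w.1 k)) +
          tidalTensor (w.1 i - w.1 k) (inverseSquareField (w.1 i - w.1 j))) := by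
  have hgrad := hasGradientAt_const_mul (hasGradientAt_inner_inverseSquareField hxij hxik)
    (-(G ^ 2 * m i * m j * m k))
  refine (hgrad.congr_of_eventuallyEq ?_).gradient
  filter_upwards [eventually_ne_nhds hxij, eventually_ne_nhds hxik] with y hyj hyk
  rw [poisson_pairPot_kinetic_pairPot G m hi hk hij hik hjk]
  · simp only [Function.update_self, Function.update_of_ne hij.symm, Function.update_of_ne hik.symm]
  · simpa only [Function.update_self, Function.update_of_ne hij.symm] using hyj
  · simpa only [Function.update_self, Function.update_of_ne hik.symm] using hyk

theorem gradPos_poisson_pairPot_kinetic_pairPot_unshared (hi : m i ≠ 0) (hk : m k ≠ 0)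
    (hij : i ≠ j) (hik : i ≠ k) (hjk : j ≠ k) (hxij : w.1 i ≠ w.1 j) (hxik : w.1 i ≠ w.1 k) :
    gradPos (poisson (poisson (pairPot G m i j) (kinetic m)) (pairPot G m i k)) j w =
      (G ^ 2 * m i * m j * m k) •
        tidalTensor (w.1 i - w.1 j) (inverseSquareField (w.1 i - w.1 k)) := by
  have hgrad := hasGradientAt_const_mul (hasGradientAt_inner_inverseSquareField_const hxij.symm
    (inverseSquareField (w.1 i - w.1 k))) (G ^ 2 * m i * m j * m k)
  rw [← neg_sub (w.1 i), tidalTensor_neg] at hgrad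
  refine (hgrad.congr_of_eventuallyEq ?_).gradient
  filter_upwards [eventually_ne_nhds hxij.symm] with y hy
  rw [poisson_pairPot_kinetic_pairPot G m hi hk hij hik hjk]
  · simp only [Function.update_self, Function.update_of_ne hij, Function.update_of_ne hjk.symm]
    rw [← neg_sub y, inverseSquareField_neg, inner_neg_left, neg_mul_neg]
  · simpa only [Function.update_self, Function.update_of_ne hij] using hy.symm
  · simp only [Function.update_of_ne hij, Function.update_of_ne hjk.symm, ne_eq, hxik,
      not_false_eq_true]

end PairPotential

/-- Fourth-order three-body error term (paper eq. A18d):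
`{{{{V_ij,T},V_ik},T},V_ij}
  = −2 (G³ m_i m_j m_k (m_i + m_j) / (r_ij⁶ r_ik³)) (x_ij·x_ik)
    − (G³ m_i m_j² m_k / (r_ij⁶ r_ik⁵)) (3 (x_ij·x_ik)² − r_ij² r_ik²)`. -/
theorem fourth_order_VTVikTV_three_body {N : ℕ} (G : ℝ) (hG : 0 < G)
    (m : Fin N → ℝ) (hm : ∀ i, 0 < m i) (i j k : Fin N)
    (hij : i ≠ j) (hik : i ≠ k) (hjk : j ≠ k) (w : Phase N)
    (hrij : ‖w.1 i - w.1 j‖ ≠ 0) (hrik : ‖w.1 i - w.1 k‖ ≠ 0)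
    (xij xik : E3)
    (hxij : xij = w.1 i - w.1 j) (hxik : xik = w.1 i - w.1 k) :
    poisson (poisson (poisson (poisson (pairPot G m i j) (kinetic m))
        (pairPot G m i k)) (kinetic m)) (pairPot G m i j) w =
      -2 * (G ^ 3 * m i * m j * m k * (m i + m j) /
          (‖xij‖ ^ 6 * ‖xik‖ ^ 3)) * ⟪xij, xik⟫ -
      G ^ 3 * m i * m j ^ 2 * m k / (‖xij‖ ^ 6 * ‖xik‖ ^ 5) *
        (3 * ⟪xij, xik⟫ ^ 2 - ‖xij‖ ^ 2 * ‖xik‖ ^ 2) := by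
  have hi := (hm i).ne'
  have hj := (hm j).ne'
  have hk := (hm k).ne'
  have hxij0 : xij ≠ 0 := norm_ne_zero_iff.mp (hxij ▸ hrij)
  have hxik0 : xik ≠ 0 := norm_ne_zero_iff.mp (hxik ▸ hrik)
  have hne_ij : w.1 i ≠ w.1 j := sub_ne_zero.mp (hxij ▸ hxij0)
  have hne_ik : w.1 i ≠ w.1 k := sub_ne_zero.mp (hxik ▸ hxik0)
  have hindep := (momentumIndep_pairPot G m i j).momentumIndep_poisson_poisson_kinetic
    (momentumIndep_pairPot G m i k) m
  rw [poisson_poisson_kinetic_pairPot G m hindep hij hi hj hne_ij,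
    gradPos_poisson_pairPot_kinetic_pairPot_shared G m hi hk hij hik hjk hne_ij hne_ik,
    gradPos_poisson_pairPot_kinetic_pairPot_unshared G m hi hk hij hik hjk hne_ij hne_ik,
    ← hxij, ← hxik]
  simp only [inner_sub_left, inner_add_left, real_inner_smul_left,
    inner_tidalTensor_self_inverseSquareField hxij0,
    inner_tidalTensor_inverseSquareField hxij0 hxik0]
  ring
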